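/- arXiv:1211.0189 — 2 statements merged into one kernel-verified Lean document; each statement's English description precedes it below -/
import Mathlib

section
/- For any real numbers α, β ∈ [0,1], there exists a Möbius pair (f,g) of complex-valued arithmetic functions, not both identically zero, such that the support of f has asymptotic density α and the support of g has asymptotic density β. Moreover, f and g can be chosen to be multiplicative functions. -/
open Filter

open scoped Classical in
noncomputable def countIn (A : Set ℕ) (x : ℕ) : ℕ :=
  ((Finset.Icc 1 x).filter (fun n => n ∈ A)).card

/-- `A ⊆ ℕ` has asymptotic density `δ`. -/
def HasDensity (A : Set ℕ) (δ : ℝ) : Prop :=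
  Tendsto (fun x : ℕ => (countIn A x : ℝ) / x) atTop (nhds δ)

/-- `(f,g)` is a Möbius pair: `f(n) = ∑_{d ∣ n} g(d)` for all positive `n`. -/
def MobiusPair (f g : ℕ → ℂ) : Prop :=
  ∀ n : ℕ, 0 < n → f n = ∑ d ∈ n.divisors, g d

/-- `h` is a multiplicative arithmetic function. -/
def IsMultFn (h : ℕ → ℂ) : Prop :=
  h 1 = 1 ∧ ∀ m n : ℕ, Nat.Coprime m n → h (m * n) = h m * h n

/-!
A multiplicative `f` and its Möbius transform `g = μ * f` can be prescribed independently at each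
prime. For disjoint sets of primes `P` and `R` we let `f p = 0` for `p ∈ P`, let `f` be constant on
the powers of each `p ∈ R`, and otherwise avoid zeros and repeated values along the powers of `p`.
Then `f n ≠ 0` iff no `p ∈ P` divides `n` exactly once, and `g n ≠ 0` iff no `p ∈ R` divides `n`.

Both supports are the outcome of a sieve whose local conditions at `p` have density
`1 - O(1 / p)`. The density of the sifted set is the product of the local densities: if `∑ 1 / p`
converges over the sieving primes, its tail bounds the proportion of integers removed by the large
ones, and otherwise the product is `0`. The primes split into two sets over each of which `∑ 1 / p`
still diverges, so a greedy choice of `P` in one and of `R` in the other makes the two products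
equal to any prescribed numbers in `[0, 1]`.
-/

open scoped Topology

section Counting

variable {A B S : Set ℕ}

theorem countIn_eq_card (A : Set ℕ) [DecidablePred (· ∈ A)] (x : ℕ) :
    countIn A x = {n ∈ Finset.Icc 1 x | n ∈ A}.card := by
  unfold countIn
  congr

theorem countIn_mono (h : ∀ n, 0 < n → n ∈ A → n ∈ B) (x : ℕ) : countIn A x ≤ countIn B x := by
  classical
  rw [countIn_eq_card, countIn_eq_card]
  refine Finset.card_le_card fun n hn => ?_
  rw [Finset.mem_filter] at hn ⊢
  exact ⟨hn.1, h n (Finset.mem_Icc.mp hn.1).1 hn.2⟩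

theorem countIn_congr (h : ∀ n, 0 < n → (n ∈ A ↔ n ∈ B)) : countIn A = countIn B :=
  funext fun x =>
    (countIn_mono (fun n hn => (h n hn).1) x).antisymm (countIn_mono (fun n hn => (h n hn).2) x)

theorem countIn_le_add (h : ∀ n, 0 < n → n ∈ A → n ∈ B ∨ n ∈ S) (x : ℕ) :
    countIn A x ≤ countIn B x + countIn S x := by
  classical
  calc countIn A x ≤ countIn (B ∪ S) x := countIn_mono h x
    _ ≤ countIn B x + countIn S x := by
        simpa only [countIn_eq_card, Set.mem_union, Finset.filter_or]
          using Finset.card_union_le _ _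

theorem countIn_sdiff_add_countIn (h : B ⊆ A) (x : ℕ) :
    countIn (A \ B) x + countIn B x = countIn A x := by
  classical
  have hfilter : {n ∈ Finset.Icc 1 x | n ∈ A \ B} =
      {n ∈ Finset.Icc 1 x | n ∈ A} \ {n ∈ Finset.Icc 1 x | n ∈ B} := by
    ext n
    simp only [Finset.mem_filter, Finset.mem_sdiff, Set.mem_sdiff]
    tauto
  simp only [countIn_eq_card, hfilter]
  exact Finset.card_sdiff_add_card_eq_card (Finset.monotone_filter_right _ fun _ _ hn => h hn)

theorem countIn_univ (x : ℕ) : countIn Set.univ x = x := by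
  simp [countIn]

theorem countIn_inter_dvd {m : ℕ} (hm : 0 < m) (hA : ∀ n, m * n ∈ A ↔ n ∈ A) (x : ℕ) :
    countIn (A ∩ {n | m ∣ n}) x = countIn A (x / m) := by
  symm
  refine Finset.card_bij (fun n _ => m * n) ?_ (fun _ _ _ _ h => Nat.eq_of_mul_eq_mul_left hm h) ?_
  · intro n hn
    simp only [Finset.mem_filter, Finset.mem_Icc, Nat.le_div_iff_mul_le hm] at hn
    simp only [Finset.mem_filter, Finset.mem_Icc]
    exact ⟨⟨Nat.mul_pos hm hn.1.1, mul_comm m n ▸ hn.1.2⟩, (hA n).2 hn.2, dvd_mul_right m n⟩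
  · intro n hn
    simp only [Finset.mem_filter, Finset.mem_Icc] at hn
    obtain ⟨⟨hpos, hle⟩, hnA, k, rfl⟩ := hn
    refine ⟨k, ?_, rfl⟩
    simp only [Finset.mem_filter, Finset.mem_Icc, Nat.le_div_iff_mul_le hm]
    exact ⟨⟨Nat.pos_of_mul_pos_left hpos, mul_comm m k ▸ hle⟩, (hA k).1 hnA⟩

theorem countIn_dvd (m x : ℕ) : countIn {n | m ∣ n} x = x / m := by
  rw [← Nat.Ioc_filter_dvd_card_eq_div, countIn_eq_card]
  rfl

theorem countIn_exists_dvd_le {P : Set ℕ} (hP : Summable (P.indicator fun p : ℕ => 1 / (p : ℝ)))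
    (x : ℕ) :
    (countIn {n | ∃ p ∈ P, p ∣ n} x : ℝ) ≤ x * ∑' p, P.indicator (fun p : ℕ => 1 / (p : ℝ)) p := by
  classical
  have hcover : {n ∈ Finset.Icc 1 x | ∃ p ∈ P, p ∣ n} ⊆
      {p ∈ Finset.Icc 1 x | p ∈ P}.biUnion fun p => {n ∈ Finset.Icc 1 x | p ∣ n} := by
    intro n hn
    simp only [Finset.mem_filter, Finset.mem_biUnion, Finset.mem_Icc] at hn ⊢
    obtain ⟨⟨hn1, hnx⟩, p, hp, hpn⟩ := hn
    exact ⟨p, ⟨⟨Nat.pos_of_dvd_of_pos hpn hn1, (Nat.le_of_dvd hn1 hpn).trans hnx⟩, hp⟩,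
      ⟨hn1, hnx⟩, hpn⟩
  have hunion : countIn {n | ∃ p ∈ P, p ∣ n} x ≤
      ∑ p ∈ Finset.Icc 1 x with p ∈ P, countIn {n | p ∣ n} x := by
    simp only [countIn_eq_card, Set.mem_ofPred_eq]
    exact (Finset.card_le_card hcover).trans Finset.card_biUnion_le
  calc (countIn {n | ∃ p ∈ P, p ∣ n} x : ℝ)
      ≤ ∑ p ∈ Finset.Icc 1 x with p ∈ P, (countIn {n | p ∣ n} x : ℝ) := by exact_mod_cast hunion
    _ ≤ ∑ p ∈ Finset.Icc 1 x with p ∈ P, x * (1 / p : ℝ) := by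
        refine Finset.sum_le_sum fun p _ => ?_
        rw [countIn_dvd, mul_one_div]
        exact Nat.cast_div_le
    _ = x * ∑ p ∈ Finset.Icc 1 x, P.indicator (fun p : ℕ => 1 / (p : ℝ)) p := by
        rw [← Finset.mul_sum, Finset.sum_indicator_eq_sum_filter]
    _ ≤ x * ∑' p, P.indicator (fun p : ℕ => 1 / (p : ℝ)) p := by
        gcongr
        exact hP.sum_le_tsum _ fun p _ => Set.indicator_nonneg (fun q _ => by positivity) p

theorem abs_countIn_sub_countIn_le (h : ∀ n, 0 < n → n ∉ S → (n ∈ A ↔ n ∈ B)) (x : ℕ) :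
    |(countIn A x : ℝ) - countIn B x| ≤ countIn S x := by
  have hAB : countIn A x ≤ countIn B x + countIn S x :=
    countIn_le_add (fun n hn hA => or_iff_not_imp_right.2 fun hS => (h n hn hS).1 hA) x
  have hBA : countIn B x ≤ countIn A x + countIn S x :=
    countIn_le_add (fun n hn hB => or_iff_not_imp_right.2 fun hS => (h n hn hS).2 hB) x
  rw [abs_sub_le_iff, sub_le_iff_le_add', sub_le_iff_le_add']
  exact ⟨mod_cast hAB, mod_cast hBA⟩

end Counting

section Density

variable {A B S : Set ℕ} {a b d δ : ℝ}

theorem hasDensity_congr (h : ∀ n, 0 < n → (n ∈ A ↔ n ∈ B)) : HasDensity A d ↔ HasDensity B d := by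
  rw [HasDensity, HasDensity, countIn_congr h]

theorem hasDensity_univ : HasDensity Set.univ 1 := by
  refine tendsto_const_nhds.congr' ?_
  filter_upwards [eventually_gt_atTop 0] with x hx
  rw [countIn_univ, div_self (Nat.cast_ne_zero.mpr hx.ne')]

theorem HasDensity.sdiff (hA : HasDensity A a) (hB : HasDensity B b) (h : B ⊆ A) :
    HasDensity (A \ B) (a - b) := by
  refine (Tendsto.sub hA hB).congr fun x => ?_
  rw [← countIn_sdiff_add_countIn h x, ← sub_div]
  push_cast
  ring

theorem tendsto_natCast_div_div (m : ℕ) :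
    Tendsto (fun x : ℕ => ((x / m : ℕ) : ℝ) / x) atTop (𝓝 (1 / m)) := by
  refine ((tendsto_nat_floor_mul_div_atTop (R := ℝ) (a := 1 / m) (by positivity)).comp
    tendsto_natCast_atTop_atTop).congr fun x => ?_
  rw [Function.comp_apply, one_div_mul_eq_div, Nat.floor_div_eq_div]

theorem HasDensity.inter_dvd {m : ℕ} (hA : HasDensity A d) (hm : 0 < m)
    (hmul : ∀ n, m * n ∈ A ↔ n ∈ A) : HasDensity (A ∩ {n | m ∣ n}) (d * (1 / m)) := by
  refine ((hA.comp (Nat.tendsto_div_const_atTop hm.ne')).mul (tendsto_natCast_div_div m)).congr'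
    ?_
  filter_upwards [eventually_ge_atTop m] with x hx
  have hquot : ((x / m : ℕ) : ℝ) ≠ 0 := Nat.cast_ne_zero.mpr (Nat.div_pos hx hm).ne'
  rw [Function.comp_apply, countIn_inter_dvd hm hmul, div_mul_div_cancel₀ hquot]

theorem hasDensity_preimage_finset {ι : Type*} {φ : ℕ → ι} {d : ι → ℝ} (s : Finset ι)
    (h : ∀ k ∈ s, HasDensity {n ∈ A | φ n = k} (d k)) :
    HasDensity {n ∈ A | φ n ∈ s} (∑ k ∈ s, d k) := by
  classical
  refine (tendsto_finsetSum s h).congr fun x => ?_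
  rw [← Finset.sum_div, ← Nat.cast_sum]
  congr 2
  unfold countIn
  rw [Finset.card_eq_sum_card_fiberwise (f := φ) (t := s) fun n hn => by simp_all]
  refine Finset.sum_congr rfl fun k hk => congrArg _ ?_
  ext n
  simp only [Finset.mem_filter, Set.mem_ofPred_eq]
  constructor
  · rintro ⟨hn, hA, rfl⟩
    exact ⟨⟨hn, hA, hk⟩, rfl⟩
  · rintro ⟨⟨hn, hA, -⟩, rfl⟩
    exact ⟨hn, hA, rfl⟩

variable {ι : Type*} {l : Filter ι} [l.NeBot] {T : ι → Set ℕ} {t : ι → ℝ}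

theorem hasDensity_of_tendsto {E : ι → Set ℕ} {ε : ι → ℝ}
    (hT : ∀ i, HasDensity (T i) (t i)) (ht : Tendsto t l (𝓝 δ))
    (hE : ∀ i x, (countIn (E i) x : ℝ) ≤ x * ε i) (hε : Tendsto ε l (𝓝 0))
    (hTS : ∀ i n, 0 < n → n ∉ E i → (n ∈ T i ↔ n ∈ S)) : HasDensity S δ := by
  have hdist : ∀ i x, |(countIn S x : ℝ) / x - countIn (T i) x / x| ≤ ε i := by
    intro i x
    rcases x.eq_zero_or_pos with rfl | hx
    · simpa using (Nat.cast_nonneg _).trans (hE i 1)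
    · have hx' : (0 : ℝ) < x := Nat.cast_pos.mpr hx
      rw [← sub_div, abs_div, abs_of_pos hx', div_le_iff₀' hx']
      exact (abs_countIn_sub_countIn_le (fun n hn h => (hTS i n hn h).symm) x).trans (hE i x)
  have hunif : TendstoUniformly (fun i x => (countIn (T i) x : ℝ) / x)
      (fun x => (countIn S x : ℝ) / x) l := by
    rw [Metric.tendstoUniformly_iff]
    intro r hr
    filter_upwards [hε.eventually (gt_mem_nhds hr)] with i hi x
    exact (hdist i x).trans_lt hi
  exact (hunif.tendstoUniformlyOnFilter.mono_right le_top).tendsto_of_eventually_tendsto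
    (.of_forall hT) ht

theorem hasDensity_zero_of_subset (hT : ∀ i, HasDensity (T i) (t i)) (ht : Tendsto t l (𝓝 0))
    (hST : ∀ i, S ⊆ T i) : HasDensity S 0 := by
  refine tendsto_order.2 ⟨fun r hr => .of_forall fun x => hr.trans_le (by positivity),
    fun r hr => ?_⟩
  obtain ⟨i, hi⟩ := (ht.eventually (gt_mem_nhds hr)).exists
  filter_upwards [(hT i).eventually (gt_mem_nhds hi)] with x hx
  refine lt_of_le_of_lt ?_ hx
  gcongr
  exact countIn_mono (fun n _ hn => hST i hn) x

end Density

section InfiniteProducts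

variable {c : ℕ → ℝ}

theorem tendsto_prod_range_zero_of_not_summable (h0 : ∀ i, 0 ≤ c i) (h1 : ∀ i, c i ≤ 1)
    (hc : ¬ Summable fun i => 1 - c i) :
    Tendsto (fun N => ∏ i ∈ Finset.range N, c i) atTop (𝓝 0) := by
  have hsum : Tendsto (fun N => ∑ i ∈ Finset.range N, (1 - c i)) atTop atTop :=
    (not_summable_iff_tendsto_nat_atTop_of_nonneg fun i => sub_nonneg.2 (h1 i)).1 hc
  refine squeeze_zero (fun N => Finset.prod_nonneg fun i _ => h0 i) (fun N => ?_)
    (Real.tendsto_exp_neg_atTop_nhds_zero.comp hsum)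
  rw [Function.comp_apply, ← Finset.sum_neg_distrib, Real.exp_sum]
  exact Finset.prod_le_prod (fun i _ => h0 i) fun i _ => by
    simpa using Real.one_sub_le_exp_neg (1 - c i)

/-- Partial products of the greedy subproduct of `∏ c i`: a factor is accepted exactly when the
product stays at least `α`. -/
noncomputable def greedyProd (c : ℕ → ℝ) (α : ℝ) : ℕ → ℝ
  | 0 => 1
  | N + 1 => if α ≤ greedyProd c α N * c N then greedyProd c α N * c N else greedyProd c α N

/-- The indices of the factors accepted by `greedyProd`. -/
def greedySet (c : ℕ → ℝ) (α : ℝ) : Set ℕ :=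
  {i | α ≤ greedyProd c α i * c i}

variable {α : ℝ}

theorem greedyProd_eq_prod (c : ℕ → ℝ) (α : ℝ) (N : ℕ) :
    greedyProd c α N = ∏ i ∈ Finset.range N, (greedySet c α).mulIndicator c i := by
  classical
  induction N with
  | zero => rfl
  | succ N ih =>
    rw [Finset.prod_range_succ, ← ih, Set.mulIndicator_apply, mul_ite, mul_one]
    rfl

theorem le_greedyProd (hα : α ≤ 1) (N : ℕ) : α ≤ greedyProd c α N := by
  induction N with
  | zero => exact hα
  | succ N ih =>
    rw [greedyProd]
    split_ifs with h
    exacts [h, ih]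

theorem greedyProd_antitone (h1 : ∀ i, c i ≤ 1) (hα0 : 0 ≤ α) (hα1 : α ≤ 1) :
    Antitone (greedyProd c α) := by
  refine antitone_nat_of_succ_le fun N => ?_
  rw [greedyProd]
  split_ifs
  exacts [mul_le_of_le_one_right (hα0.trans (le_greedyProd hα1 N)) (h1 N), le_rfl]

theorem tendsto_greedyProd (h0 : ∀ i, 0 ≤ c i) (h1 : ∀ i, c i ≤ 1) (hc : Tendsto c atTop (𝓝 1))
    (hns : ¬ Summable fun i => 1 - c i) (hα0 : 0 ≤ α) (hα1 : α ≤ 1) :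
    Tendsto (greedyProd c α) atTop (𝓝 α) := by
  have hanti := greedyProd_antitone h1 hα0 hα1
  have hlim := tendsto_atTop_ciInf hanti
    ⟨α, Set.forall_mem_range.2 (le_greedyProd (c := c) hα1)⟩
  set L := ⨅ N, greedyProd c α N
  rcases (ge_of_tendsto' hlim (le_greedyProd hα1)).eq_or_lt with hαL | hαL
  · rwa [← hαL] at hlim
  -- If `α < L`, all but finitely many factors are accepted, so the product diverges to `0`.
  have hLc : Tendsto (fun i => L * c i) atTop (𝓝 L) := by simpa using hc.const_mul L
  have haccept : ∀ᶠ i in atTop, i ∈ greedySet c α := by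
    filter_upwards [hLc.eventually (lt_mem_nhds hαL)] with i hi
    exact hi.le.trans (mul_le_mul_of_nonneg_right (hanti.le_of_tendsto hlim i) (h0 i))
  have hns' : ¬ Summable fun i => 1 - (greedySet c α).mulIndicator c i := by
    rwa [summable_congr_atTop (haccept.mono fun i hi => by rw [Set.mulIndicator_of_mem hi])]
  have hzero : Tendsto (greedyProd c α) atTop (𝓝 0) := by
    simp only [funext (greedyProd_eq_prod c α)]
    refine tendsto_prod_range_zero_of_not_summable (fun i => ?_) (fun i => ?_) hns'
    · by_cases hi : i ∈ greedySet c α <;> simp [hi, h0 i]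
    · exact Set.mulIndicator_apply_le_one fun _ => h1 i
  exact absurd (tendsto_nhds_unique hlim hzero) (hα0.trans_lt hαL).ne'

theorem exists_tendsto_prod_mulIndicator (h0 : ∀ i, 0 ≤ c i) (h1 : ∀ i, c i ≤ 1)
    (hc : Tendsto c atTop (𝓝 1)) (hns : ¬ Summable fun i => 1 - c i)
    (hα : α ∈ Set.Icc (0 : ℝ) 1) :
    ∃ I : Set ℕ, Tendsto (fun N => ∏ i ∈ Finset.range N, I.mulIndicator c i) atTop (𝓝 α) :=
  ⟨greedySet c α, (tendsto_greedyProd h0 h1 hc hns hα.1 hα.2).congr (greedyProd_eq_prod c α)⟩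

end InfiniteProducts

section LocalDensity

variable {K A : Set ℕ} {d : ℝ} {p : ℕ}

/-- The density of the integers of `p`-adic valuation `k`, for `p` prime. -/
noncomputable def valuationDensity (p k : ℕ) : ℝ :=
  (1 - (p : ℝ)⁻¹) * (p : ℝ)⁻¹ ^ k

/-- The density of the integers whose `p`-adic valuation is not in `K`, for `p` prime. -/
noncomputable def localDensity (K : Set ℕ) (p : ℕ) : ℝ :=
  ∑' k, Kᶜ.indicator (valuationDensity p) k

theorem hasSum_valuationDensity (hp : 1 < p) : HasSum (valuationDensity p) 1 := by
  have hp' : (p : ℝ)⁻¹ < 1 := inv_lt_one_of_one_lt₀ (Nat.one_lt_cast.mpr hp)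
  have hgeom := (hasSum_geometric_of_lt_one (by positivity) hp').mul_left (1 - (p : ℝ)⁻¹)
  rwa [mul_inv_cancel₀ (sub_pos.2 hp').ne'] at hgeom

theorem valuationDensity_nonneg (hp : 1 < p) (k : ℕ) : 0 ≤ valuationDensity p k :=
  mul_nonneg (sub_nonneg.2 (inv_le_one_of_one_le₀ (Nat.one_le_cast.mpr hp.le))) (by positivity)

theorem hasSum_localDensity (K : Set ℕ) (hp : 1 < p) :
    HasSum (Kᶜ.indicator (valuationDensity p)) (localDensity K p) :=
  ((hasSum_valuationDensity hp).summable.indicator _).hasSum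

theorem one_sub_one_div_le_localDensity (hK : 0 ∉ K) (hp : 1 < p) :
    1 - 1 / (p : ℝ) ≤ localDensity K p := by
  have hterm := le_hasSum (hasSum_localDensity K hp) 0 fun k _ =>
    Set.indicator_apply_nonneg fun _ => valuationDensity_nonneg hp k
  rwa [Set.indicator_of_mem hK, valuationDensity, pow_zero, mul_one, ← one_div] at hterm

theorem localDensity_le_one_sub (hK : 1 ∈ K) (hp : 1 < p) :
    localDensity K p ≤ 1 - 1 / 2 * (1 / (p : ℝ)) := by
  have hcompl : HasSum (K.indicator (valuationDensity p)) (1 - localDensity K p) := by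
    have hsub := (hasSum_valuationDensity hp).sub (hasSum_localDensity K hp)
    rwa [← Pi.sub_def, ← Set.indicator_compl, compl_compl] at hsub
  have hterm := le_hasSum hcompl 1 fun k _ =>
    Set.indicator_apply_nonneg fun _ => valuationDensity_nonneg hp k
  rw [Set.indicator_of_mem hK, valuationDensity, pow_one] at hterm
  have hhalf : 1 / (p : ℝ) ≤ 1 / 2 :=
    one_div_le_one_div_of_le two_pos (by exact_mod_cast hp)
  have hpos : 0 ≤ 1 / (p : ℝ) := by positivity
  rw [← one_div] at hterm
  nlinarith

theorem HasDensity.factorization_eq (hA : HasDensity A d) (hp : p.Prime)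
    (hmul : ∀ n, p * n ∈ A ↔ n ∈ A) (k : ℕ) :
    HasDensity {n ∈ A | n.factorization p = k} (d * valuationDensity p k) := by
  have hmul_pow : ∀ k n, p ^ k * n ∈ A ↔ n ∈ A := by
    intro k
    induction k with
    | zero => simp
    | succ k ih => exact fun n => by rw [pow_succ, mul_assoc, ih, hmul]
  have hpow := fun k => hA.inter_dvd (pow_pos hp.pos k) (hmul_pow k)
  have hlevel := (hpow k).sdiff (hpow (k + 1)) fun n hn =>
    ⟨hn.1, (pow_dvd_pow p k.le_succ).trans hn.2⟩
  convert (hasDensity_congr fun n hn => ?_).1 hlevel using 1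
  · rw [valuationDensity]
    push_cast
    ring
  · simp only [Set.mem_sdiff, Set.mem_inter_iff, Set.mem_ofPred_eq,
      hp.pow_dvd_iff_le_factorization hn.ne']
    grind

theorem HasDensity.factorization_notMem (hA : HasDensity A d) (hp : p.Prime)
    (hmul : ∀ n, p * n ∈ A ↔ n ∈ A) (K : Set ℕ) :
    HasDensity {n ∈ A | n.factorization p ∉ K} (d * localDensity K p) := by
  classical
  refine hasDensity_of_tendsto (l := atTop) (E := fun N => {n | p ^ N ∣ n})
    (fun N => hasDensity_preimage_finset {k ∈ Finset.range N | k ∈ Kᶜ}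
      fun k _ => hA.factorization_eq hp hmul k) ?_ (ε := fun N => ((p : ℝ)⁻¹) ^ N) ?_ ?_ ?_
  · refine ((hasSum_localDensity K hp.one_lt).tendsto_sum_nat.const_mul d).congr fun N => ?_
    rw [Finset.sum_indicator_eq_sum_filter, Finset.mul_sum]
  · intro N x
    rw [countIn_dvd, inv_pow, ← div_eq_mul_inv, ← Nat.cast_pow]
    exact Nat.cast_div_le
  · exact tendsto_pow_atTop_nhds_zero_of_lt_one (by positivity)
      (inv_lt_one_of_one_lt₀ (Nat.one_lt_cast.mpr hp.one_lt))
  · intro N n hn hE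
    have hlt : n.factorization p < N := by
      simpa [hp.pow_dvd_iff_le_factorization hn.ne'] using hE
    simp [hlt]

end LocalDensity

section Sieve

variable {K P Q : Set ℕ}

/-- The integers that survive a sieve by the primes `p ∈ P`, where `p` removes those whose `p`-adic
valuation lies in `K`. -/
def sifted (K P : Set ℕ) : Set ℕ :=
  {n | ∀ p ∈ P, n.factorization p ∉ K}

theorem mul_mem_sifted_iff {q : ℕ} (hq : q.Prime) (hqP : q ∉ P) (n : ℕ) :
    q * n ∈ sifted K P ↔ n ∈ sifted K P := by
  rcases eq_or_ne n 0 with rfl | hn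
  · rw [mul_zero]
  refine forall₂_congr fun p hp => ?_
  have hpq : q ≠ p := by
    rintro rfl
    exact hqP hp
  rw [Nat.factorization_mul hq.ne_zero hn, hq.factorization, Finsupp.add_apply,
    Finsupp.single_eq_of_ne' hpq, zero_add]

theorem hasDensity_sifted_finset (K : Set ℕ) {s : Finset ℕ} (hs : ∀ p ∈ s, p.Prime) :
    HasDensity (sifted K s) (∏ p ∈ s, localDensity K p) := by
  induction s using Finset.induction_on with
  | empty => simpa [sifted] using hasDensity_univ
  | insert p s hp ih =>
    rw [Finset.forall_mem_insert] at hs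
    have hstep := (ih hs.2).factorization_notMem hs.1 (mul_mem_sifted_iff hs.1 hp) K
    rw [Finset.prod_insert hp, mul_comm]
    convert hstep using 1
    ext n
    simp [sifted, and_comm]

theorem hasDensity_sifted_inter_Iio (K : Set ℕ) (hP : ∀ p ∈ P, p.Prime) (N : ℕ) :
    HasDensity (sifted K (P ∩ Set.Iio N))
      (∏ p ∈ Finset.range N, P.mulIndicator (localDensity K) p) := by
  classical
  rw [Finset.prod_mulIndicator_eq_prod_filter]
  convert hasDensity_sifted_finset K (s := {p ∈ Finset.range N | p ∈ P}) fun p hp =>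
    hP p (Finset.mem_filter.1 hp).2
  ext p
  simp [and_comm]

theorem tendsto_tsum_indicator_inter_Ici {a : ℕ → ℝ} (ha : Summable (P.indicator a)) :
    Tendsto (fun N => ∑' p, (P ∩ Set.Ici N).indicator a p) atTop (𝓝 0) := by
  rw [← tsum_zero (α := ℝ) (β := ℕ)]
  refine tendsto_tsum_of_dominated_convergence ha.norm (fun p => ?_) (.of_forall fun N p => ?_)
  · refine tendsto_const_nhds.congr' ?_
    filter_upwards [eventually_gt_atTop p] with N hN
    exact (Set.indicator_of_notMem (fun h => hN.not_ge h.2) a).symm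
  · exact norm_indicator_le_of_subset Set.inter_subset_left a p

theorem hasDensity_sifted_of_summable {δ : ℝ} (hK : 0 ∉ K) (hP : ∀ p ∈ P, p.Prime)
    (hsum : Summable (P.indicator fun p : ℕ => 1 / (p : ℝ)))
    (hlim : Tendsto (fun N => ∏ p ∈ Finset.range N, P.mulIndicator (localDensity K) p)
      atTop (𝓝 δ)) : HasDensity (sifted K P) δ := by
  have htail : ∀ N, Summable ((P ∩ Set.Ici N).indicator fun p : ℕ => 1 / (p : ℝ)) := fun N => by
    rw [Set.inter_comm, ← Set.indicator_indicator]
    exact hsum.indicator _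
  refine hasDensity_of_tendsto (hasDensity_sifted_inter_Iio K hP) hlim
    (fun N => countIn_exists_dvd_le (htail N)) (tendsto_tsum_indicator_inter_Ici hsum) ?_
  intro N n _ hE
  refine ⟨fun hn p hp hpK => ?_, fun hn p hp => hn p hp.1⟩
  rcases lt_or_ge p N with hpN | hpN
  · exact hn p ⟨hp, hpN⟩ hpK
  · have hndvd : ¬ p ∣ n := fun hdvd => hE ⟨p, ⟨hp, hpN⟩, hdvd⟩
    rw [Nat.factorization_eq_zero_of_not_dvd hndvd] at hpK
    exact hK hpK

theorem hasDensity_sifted_zero (hP : ∀ p ∈ P, p.Prime)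
    (hlim : Tendsto (fun N => ∏ p ∈ Finset.range N, P.mulIndicator (localDensity K) p)
      atTop (𝓝 0)) : HasDensity (sifted K P) 0 :=
  hasDensity_zero_of_subset (hasDensity_sifted_inter_Iio K hP) hlim
    fun _ _ hn p hp => hn p hp.1

theorem mulIndicator_localDensity_mem_Icc (h0 : 0 ∉ K) (h1 : 1 ∈ K) (hP : ∀ p ∈ P, p.Prime)
    (p : ℕ) :
    P.mulIndicator (localDensity K) p ∈
      Set.Icc (1 - 1 / (p : ℝ)) (1 - 1 / 2 * P.indicator (fun p : ℕ => 1 / (p : ℝ)) p) := by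
  by_cases hp : p ∈ P
  · rw [Set.mulIndicator_of_mem hp, Set.indicator_of_mem hp]
    exact ⟨one_sub_one_div_le_localDensity h0 (hP p hp).one_lt,
      localDensity_le_one_sub h1 (hP p hp).one_lt⟩
  · rw [Set.mulIndicator_of_notMem hp, Set.indicator_of_notMem hp, mul_zero, sub_zero]
    exact ⟨sub_le_self 1 (by positivity), le_rfl⟩

theorem mulIndicator_localDensity_nonneg (h0 : 0 ∉ K) (h1 : 1 ∈ K) (hP : ∀ p ∈ P, p.Prime)
    (p : ℕ) : 0 ≤ P.mulIndicator (localDensity K) p :=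
  (sub_nonneg.2 (by simpa using Nat.cast_inv_le_one p)).trans
    (mulIndicator_localDensity_mem_Icc h0 h1 hP p).1

theorem mulIndicator_localDensity_le_one (h0 : 0 ∉ K) (h1 : 1 ∈ K) (hP : ∀ p ∈ P, p.Prime)
    (p : ℕ) : P.mulIndicator (localDensity K) p ≤ 1 :=
  (mulIndicator_localDensity_mem_Icc h0 h1 hP p).2.trans <| sub_le_self 1 <|
    mul_nonneg one_half_pos.le <| Set.indicator_apply_nonneg fun _ => by positivity

theorem tendsto_mulIndicator_localDensity (h0 : 0 ∉ K) (h1 : 1 ∈ K) (hP : ∀ p ∈ P, p.Prime) :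
    Tendsto (P.mulIndicator (localDensity K)) atTop (𝓝 1) := by
  refine tendsto_of_tendsto_of_tendsto_of_le_of_le ?_ tendsto_const_nhds
    (fun p => (mulIndicator_localDensity_mem_Icc h0 h1 hP p).1)
    (mulIndicator_localDensity_le_one h0 h1 hP)
  simpa using tendsto_one_div_atTop_nhds_zero_nat.const_sub (1 : ℝ)

theorem summable_one_div_of_summable_one_sub_localDensity (h0 : 0 ∉ K) (h1 : 1 ∈ K)
    (hP : ∀ p ∈ P, p.Prime) (h : Summable fun p => 1 - P.mulIndicator (localDensity K) p) :
    Summable (P.indicator fun p : ℕ => 1 / (p : ℝ)) := by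
  refine .of_nonneg_of_le (Set.indicator_nonneg fun p _ => by positivity) (fun p => ?_)
    (h.mul_left 2)
  linarith [(mulIndicator_localDensity_mem_Icc h0 h1 hP p).2]

theorem hasDensity_sifted {δ : ℝ} (h0 : 0 ∉ K) (h1 : 1 ∈ K) (hP : ∀ p ∈ P, p.Prime)
    (hlim : Tendsto (fun N => ∏ p ∈ Finset.range N, P.mulIndicator (localDensity K) p)
      atTop (𝓝 δ)) : HasDensity (sifted K P) δ := by
  by_cases hsum : Summable fun p => 1 - P.mulIndicator (localDensity K) p
  · exact hasDensity_sifted_of_summable h0 hP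
      (summable_one_div_of_summable_one_sub_localDensity h0 h1 hP hsum) hlim
  · have hzero := tendsto_prod_range_zero_of_not_summable
      (mulIndicator_localDensity_nonneg h0 h1 hP) (mulIndicator_localDensity_le_one h0 h1 hP) hsum
    rw [tendsto_nhds_unique hlim hzero]
    exact hasDensity_sifted_zero hP hzero

theorem exists_subset_hasDensity_sifted {α : ℝ} (h0 : 0 ∉ K) (h1 : 1 ∈ K)
    (hQ : ∀ p ∈ Q, p.Prime) (hns : ¬ Summable (Q.indicator fun p : ℕ => 1 / (p : ℝ)))
    (hα : α ∈ Set.Icc (0 : ℝ) 1) : ∃ P ⊆ Q, HasDensity (sifted K P) α := by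
  obtain ⟨I, hI⟩ := exists_tendsto_prod_mulIndicator (mulIndicator_localDensity_nonneg h0 h1 hQ)
    (mulIndicator_localDensity_le_one h0 h1 hQ) (tendsto_mulIndicator_localDensity h0 h1 hQ)
    (mt (summable_one_div_of_summable_one_sub_localDensity h0 h1 hQ) hns) hα
  rw [Set.mulIndicator_mulIndicator] at hI
  exact ⟨I ∩ Q, Set.inter_subset_right, hasDensity_sifted h0 h1 (fun p hp => hQ p hp.2) hI⟩

end Sieve

section Splitting

theorem not_summable_even_and_odd {a : ℕ → ℝ} (h0 : ∀ i, 0 ≤ a i) (ha : Antitone a)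
    (hns : ¬ Summable a) :
    (¬ Summable fun i => a (2 * i)) ∧ ¬ Summable fun i => a (2 * i + 1) := by
  have hodd_of_even : (Summable fun i => a (2 * i)) → Summable fun i => a (2 * i + 1) :=
    .of_nonneg_of_le (fun i => h0 _) fun i => ha (Nat.le_succ _)
  have heven_of_odd : (Summable fun i => a (2 * i + 1)) → Summable fun i => a (2 * i) := fun h =>
    (summable_nat_add_iff 1).1 <| h.of_nonneg_of_le (fun i => h0 _) fun i => ha (by omega)
  exact ⟨fun h => hns (h.even_add_odd (hodd_of_even h)),
    fun h => hns ((heven_of_odd h).even_add_odd h)⟩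

theorem summable_comp_iff_indicator_range {α β E : Type*} [AddCommGroup E] [TopologicalSpace E]
    {a : β → E} {v : α → β} (hv : Function.Injective v) :
    Summable (a ∘ v) ↔ Summable ((Set.range v).indicator a) := by
  rw [← hv.summable_iff fun n hn => Set.indicator_of_notMem hn a, Set.indicator_range_comp]

theorem exists_disjoint_not_summable_indicator {s : Set ℕ} {a : ℕ → ℝ} (h0 : ∀ n, 0 ≤ a n)
    (ha : AntitoneOn a s) (hns : ¬ Summable (s.indicator a)) :
    ∃ Q ⊆ s, ∃ R ⊆ s, Disjoint Q R ∧
      ¬ Summable (Q.indicator a) ∧ ¬ Summable (R.indicator a) := by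
  have hs : s.Infinite := fun hfin =>
    hns (summable_of_hasFiniteSupport (hfin.subset Set.support_indicator_subset))
  set u := Nat.nth (· ∈ s)
  have hmono : StrictMono u := Nat.nth_strictMono hs
  have hmem : ∀ i, u i ∈ s := Nat.nth_mem_of_infinite hs
  have hns' : ¬ Summable (a ∘ u) := by
    rwa [summable_comp_iff_indicator_range hmono.injective,
      Nat.range_nth_of_infinite (p := (· ∈ s)) hs]
  obtain ⟨heven, hodd⟩ := not_summable_even_and_odd (fun i => h0 (u i))
    (fun i j hij => ha (hmem i) (hmem j) (hmono.monotone hij)) hns'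
  have hinj_even : Function.Injective fun i => u (2 * i) := fun i j h => by
    simpa using hmono.injective h
  have hinj_odd : Function.Injective fun i => u (2 * i + 1) := fun i j h => by
    simpa using hmono.injective h
  refine ⟨Set.range fun i => u (2 * i), Set.range_subset_iff.2 fun i => hmem _,
    Set.range fun i => u (2 * i + 1), Set.range_subset_iff.2 fun i => hmem _, ?_,
    mt (summable_comp_iff_indicator_range hinj_even).2 heven,
    mt (summable_comp_iff_indicator_range hinj_odd).2 hodd⟩
  rw [Set.disjoint_left]
  rintro _ ⟨i, rfl⟩ ⟨j, hij⟩
  have := hmono.injective hij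
  omega

theorem exists_disjoint_primes_not_summable_one_div :
    ∃ Q R : Set ℕ, Disjoint Q R ∧ (∀ p ∈ Q, p.Prime) ∧ (∀ p ∈ R, p.Prime) ∧
      (¬ Summable (Q.indicator fun p : ℕ => 1 / (p : ℝ))) ∧
      ¬ Summable (R.indicator fun p : ℕ => 1 / (p : ℝ)) := by
  obtain ⟨Q, hQ, R, hR, hQR, hns⟩ := exists_disjoint_not_summable_indicator
    (fun n => by positivity)
    (fun p hp q _ hpq =>
      one_div_le_one_div_of_le (Nat.cast_pos.2 hp.pos) (Nat.cast_le.2 hpq))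
    not_summable_one_div_on_primes
  exact ⟨Q, R, hQR, hQ, hR, hns⟩

end Splitting

section MultiplicativeFunctions

open ArithmeticFunction
open scoped ArithmeticFunction.Moebius

/-- The multiplicative function with value `u p k` at the prime power `p ^ k`, `k > 0`. -/
noncomputable def ofPrimePowers {R : Type*} [CommMonoidWithZero R] (u : ℕ → ℕ → R) :
    ArithmeticFunction R where
  toFun n := if n = 0 then 0 else n.factorization.prod u
  map_zero' := if_pos rfl

theorem ofPrimePowers_apply {R : Type*} [CommMonoidWithZero R] (u : ℕ → ℕ → R) {n : ℕ}
    (hn : n ≠ 0) : ofPrimePowers u n = n.factorization.prod u :=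
  if_neg hn

theorem isMultiplicative_ofPrimePowers {R : Type*} [CommMonoidWithZero R] (u : ℕ → ℕ → R) :
    (ofPrimePowers u).IsMultiplicative := by
  refine IsMultiplicative.iff_ne_zero.2 ⟨?_, fun {m n} hm hn hmn => ?_⟩
  · simp [ofPrimePowers_apply u one_ne_zero]
  · rw [ofPrimePowers_apply u hm, ofPrimePowers_apply u hn,
      ofPrimePowers_apply u (mul_ne_zero hm hn),
      Nat.factorization_mul hm hn]
    exact Finsupp.prod_add_index_of_disjoint hmn.disjoint_primeFactors _

theorem ofPrimePowers_prime_pow {R : Type*} [CommMonoidWithZero R] {u : ℕ → ℕ → R} {p : ℕ}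
    (hp : p.Prime) (hu : u p 0 = 1) (k : ℕ) : ofPrimePowers u (p ^ k) = u p k := by
  rw [ofPrimePowers_apply u (pow_ne_zero k hp.ne_zero), hp.factorization_pow,
    Finsupp.prod_single_index hu]

theorem sum_divisors_moebius_mul {R : Type*} [Ring R] (f : ArithmeticFunction R) (n : ℕ) :
    ∑ d ∈ n.divisors, ((μ : ArithmeticFunction R) * f) d = f n := by
  rw [← coe_zeta_mul_apply, ← mul_assoc, coe_zeta_mul_coe_moebius, one_mul]

theorem moebius_mul_prime_pow_succ {R : Type*} [Ring R] (f : ArithmeticFunction R) {p : ℕ}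
    (hp : p.Prime) (k : ℕ) :
    ((μ : ArithmeticFunction R) * f) (p ^ (k + 1)) = f (p ^ (k + 1)) - f (p ^ k) := by
  rw [← sum_divisors_moebius_mul f (p ^ (k + 1)), ← sum_divisors_moebius_mul f (p ^ k),
    Nat.sum_divisors_prime_pow hp, Nat.sum_divisors_prime_pow hp, Finset.sum_range_succ _ (k + 1),
    add_sub_cancel_left]

theorem ne_zero_iff_mem_sifted {R : Type*} [CommMonoidWithZero R] [NoZeroDivisors R]
    [Nontrivial R] {h : ArithmeticFunction R} {K P : Set ℕ} (hmult : h.IsMultiplicative)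
    (hK : 0 ∉ K)
    (hlocal : ∀ p k, p.Prime → (h (p ^ (k + 1)) ≠ 0 ↔ (p ∈ P → k + 1 ∉ K)))
    {n : ℕ} (hn : n ≠ 0) :
    h n ≠ 0 ↔ n ∈ sifted K P := by
  have hlocal' : ∀ p ∈ n.primeFactors,
      (h (p ^ n.factorization p) ≠ 0 ↔ (p ∈ P → n.factorization p ∉ K)) := by
    intro p hp
    have hprime := Nat.prime_of_mem_primeFactors hp
    have hpos := hprime.factorization_pos_of_dvd hn (Nat.dvd_of_mem_primeFactors hp)
    rw [← Nat.sub_add_cancel hpos]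
    exact hlocal p _ hprime
  rw [hmult.multiplicative_factorization h hn, Finsupp.prod, Finset.prod_ne_zero_iff,
    Nat.support_factorization, forall₂_congr hlocal']
  refine ⟨fun hall p hpP => ?_, fun hall p _ => hall p⟩
  by_cases hp : p ∈ n.primeFactors
  · exact hall p hp hpP
  · rw [← Nat.support_factorization, Finsupp.notMem_support_iff] at hp
    rwa [hp]

variable {P R : Set ℕ}

open scoped Classical in
/-- Values `f (p ^ k)` for a Möbius pair `(f, g)` in which `f` vanishes at `p` for `p ∈ P` and `g`
at all `p ^ k`, `k > 0`, for `p ∈ R`. Powers of `2` make both nonzero at the other prime powers,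
since consecutive ones differ. -/
noncomputable def localFactor (P R : Set ℕ) (p k : ℕ) : ℂ :=
  if p ∈ R then 1 else if p ∈ P ∧ k = 1 then 0 else 2 ^ k

theorem localFactor_zero (P R : Set ℕ) (p : ℕ) : localFactor P R p 0 = 1 := by
  simp [localFactor]

theorem localFactor_ne_zero_iff (hPR : Disjoint P R) (p k : ℕ) :
    localFactor P R p k ≠ 0 ↔ (p ∈ P → k ≠ 1) := by
  have hdisj : p ∈ P → p ∉ R := fun hp => Set.disjoint_left.1 hPR hp
  unfold localFactor
  split_ifs <;> simp <;> tauto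

theorem localFactor_succ_ne_iff (P R : Set ℕ) (p k : ℕ) :
    localFactor P R p (k + 1) ≠ localFactor P R p k ↔ p ∉ R := by
  have hpow : (2 : ℂ) ^ (k + 1) ≠ 2 ^ k := by simp [pow_succ]
  unfold localFactor
  split_ifs <;> simp_all

theorem ofPrimePowers_localFactor_ne_zero_iff (hPR : Disjoint P R) {n : ℕ} (hn : n ≠ 0) :
    ofPrimePowers (localFactor P R) n ≠ 0 ↔ n ∈ sifted {1} P := by
  refine ne_zero_iff_mem_sifted (isMultiplicative_ofPrimePowers _) zero_ne_one
    (fun p k hp => ?_) hn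
  rw [ofPrimePowers_prime_pow hp (localFactor_zero P R p), localFactor_ne_zero_iff hPR,
    Set.mem_singleton_iff]

theorem moebius_mul_localFactor_ne_zero_iff (P R : Set ℕ) {n : ℕ} (hn : n ≠ 0) :
    ((μ : ArithmeticFunction ℂ) * ofPrimePowers (localFactor P R)) n ≠ 0 ↔
      n ∈ sifted {0}ᶜ R := by
  refine ne_zero_iff_mem_sifted
    (isMultiplicative_moebius.intCast.mul (isMultiplicative_ofPrimePowers _)) (by simp)
    (fun p k hp => ?_) hn
  rw [moebius_mul_prime_pow_succ _ hp, sub_ne_zero,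
    ofPrimePowers_prime_pow hp (localFactor_zero P R p),
    ofPrimePowers_prime_pow hp (localFactor_zero P R p), localFactor_succ_ne_iff]
  simp

theorem isMultFn_of_isMultiplicative {f : ArithmeticFunction ℂ} (hf : f.IsMultiplicative) :
    IsMultFn f :=
  ⟨hf.map_one, fun _ _ h => hf.map_mul_of_coprime h⟩

end MultiplicativeFunctions

/-- For any `α, β ∈ [0,1]` there is a nonzero Möbius pair `(f,g)`, with `f` and
`g` multiplicative, such that `supp f` has density `α` and `supp g` has density `β`. -/
theorem exists_mobius_pair_prescribed_densities (α β : ℝ)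
    (hα : α ∈ Set.Icc (0 : ℝ) 1) (hβ : β ∈ Set.Icc (0 : ℝ) 1) :
    ∃ f g : ℕ → ℂ, MobiusPair f g ∧ (∃ n : ℕ, 0 < n ∧ (f n ≠ 0 ∨ g n ≠ 0)) ∧
      HasDensity {n : ℕ | f n ≠ 0} α ∧ HasDensity {n : ℕ | g n ≠ 0} β ∧
      IsMultFn f ∧ IsMultFn g := by
  obtain ⟨Q, Q', hQQ', hQ, hQ', hns, hns'⟩ := exists_disjoint_primes_not_summable_one_div
  obtain ⟨P, hPQ, hP⟩ := exists_subset_hasDensity_sifted (K := {1}) (by simp) (by simp) hQ hns hα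
  obtain ⟨R, hRQ', hR⟩ :=
    exists_subset_hasDensity_sifted (K := {0}ᶜ) (by simp) (by simp) hQ' hns' hβ
  have hPR : Disjoint P R := hQQ'.mono hPQ hRQ'
  let f := ofPrimePowers (localFactor P R)
  let g := (ArithmeticFunction.moebius : ArithmeticFunction ℂ) * f
  have hf : f.IsMultiplicative := isMultiplicative_ofPrimePowers _
  have hg : g.IsMultiplicative := ArithmeticFunction.isMultiplicative_moebius.intCast.mul hf
  refine ⟨f, g, fun n _ => (sum_divisors_moebius_mul f n).symm,
    ⟨1, one_pos, .inl (hf.map_one ▸ one_ne_zero)⟩, ?_, ?_,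
    isMultFn_of_isMultiplicative hf, isMultFn_of_isMultiplicative hg⟩
  · exact (hasDensity_congr fun n hn => ofPrimePowers_localFactor_ne_zero_iff hPR hn.ne').2 hP
  · exact (hasDensity_congr fun n hn => moebius_mul_localFactor_ne_zero_iff P R hn.ne').2 hR
end

section
/- Let A be a set of natural numbers whose set of multiples M(A) possesses an asymptotic density. Then d(M(A)) ≤ 1 − ∏_{a∈A} (1 − 1/a), where the product is interpreted as the infinite product over all elements of A. -/
open Filter

/-- `A` is thin: `∑_{a ∈ A} 1/a < ∞`. -/
def Thin (A : Set ℕ) : Prop := Summable (fun a : A => (1 : ℝ) / a)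

/-- The set of multiples of `A`: positive integers with at least one divisor in `A`. -/
def setOfMultiples (A : Set ℕ) : Set ℕ := {n : ℕ | 0 < n ∧ ∃ a ∈ A, a ∣ n}

/-!
For finitely many positive integers, `M(B)` is periodic, and the bound holds exactly over a full
period `N`, by induction on `B`: if every element of `B` divides `N`, a multiple of `a` up to
`a * N` which is not in `M(B)` is `a * m` for some `m ≤ N` which is not in `M(B)` either, so
adjoining `a` to `B` enlarges the count up to `a * N` by at most `N - #(M(B) ∩ [1, N])`.

If the sum of the `1 / a` converges, the multiples of the elements outside a large finite part have
upper density at most a tail of this series. If it diverges, the product vanishes and there is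
nothing to prove.
-/

section Counting

variable {S T : Set ℕ}

lemma countIn_le (S : Set ℕ) (x : ℕ) : countIn S x ≤ x := by
  classical
  simpa [countIn] using Finset.card_filter_le (Finset.Icc 1 x) (· ∈ S)

lemma countIn_mono_right (S : Set ℕ) : Monotone (countIn S) := by
  classical
  exact fun _ _ hxy ↦
    Finset.card_le_card (Finset.filter_subset_filter _ (Finset.Icc_subset_Icc_right hxy))

lemma countIn_mono_left (hST : S ⊆ T) (x : ℕ) : countIn S x ≤ countIn T x := by
  classical
  exact Finset.card_le_card (Finset.monotone_filter_right _ fun _ _ hn ↦ hST hn)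

lemma countIn_congr_s10 (h : ∀ n, 0 < n → (n ∈ S ↔ n ∈ T)) (x : ℕ) : countIn S x = countIn T x := by
  classical
  exact congrArg Finset.card <| Finset.filter_congr fun n hn ↦ h n (Finset.mem_Icc.1 hn).1

lemma countIn_union_le (S T : Set ℕ) (x : ℕ) :
    countIn (S ∪ T) x ≤ countIn S x + countIn T x := by
  classical
  simpa [countIn, Finset.filter_or] using Finset.card_union_le _ _

lemma countIn_add_countIn_compl (S : Set ℕ) (x : ℕ) : countIn S x + countIn Sᶜ x = x := by
  classical
  simpa [countIn] using Finset.card_filter_add_card_filter_not (s := Finset.Icc 1 x) (· ∈ S)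

lemma countIn_image_mul_left_le (S : Set ℕ) (a x : ℕ) :
    countIn ((a * ·) '' S) (a * x) ≤ countIn S x := by
  classical
  refine (Finset.card_le_card ?_).trans (Finset.card_image_le (f := (a * ·)))
  intro n hn
  simp only [Finset.mem_filter, Finset.mem_Icc] at hn
  obtain ⟨⟨hpos, hle⟩, m, hm, rfl⟩ := hn
  have ha : 0 < a := Nat.pos_of_mul_pos_right hpos
  have hm0 : 0 < m := Nat.pos_of_mul_pos_left hpos
  simp only [Finset.mem_image, Finset.mem_filter, Finset.mem_Icc]
  exact ⟨m, ⟨⟨hm0, Nat.le_of_mul_le_mul_left hle ha⟩, hm⟩, rfl⟩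

open scoped Classical in
lemma countIn_succ (S : Set ℕ) (x : ℕ) :
    countIn S (x + 1) = countIn S x + if x + 1 ∈ S then 1 else 0 := by
  rw [countIn, ← Finset.insert_Icc_right_eq_Icc_add_one (by omega), Finset.filter_insert]
  split_ifs <;> simp [countIn]

lemma countIn_add (S : Set ℕ) (x y : ℕ) :
    countIn S (x + y) = countIn S x + countIn {n | x + n ∈ S} y := by
  classical
  induction y with
  | zero => simp [countIn]
  | succ y ih =>
    rw [← add_assoc, countIn_succ, countIn_succ, ih, add_assoc]
    simp only [Set.mem_ofPred_eq, add_assoc]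

lemma countIn_mul_of_periodic {L : ℕ} (h : ∀ n, 0 < n → (L + n ∈ S ↔ n ∈ S)) (k : ℕ) :
    countIn S (L * k) = k * countIn S L := by
  have hshift : ∀ x, countIn {n | L + n ∈ S} x = countIn S x := countIn_congr_s10 h
  induction k with
  | zero => simp [countIn]
  | succ k ih => rw [mul_add_one, add_comm, countIn_add, hshift, ih, add_one_mul, add_comm]

end Counting

section UpperDensity

variable {S : Set ℕ}

/-- The upper asymptotic density of a set of natural numbers. The `limsup` carries no junk value, as
`countIn S x / x` lies in `[0, 1]`. -/
noncomputable def upperDensity (S : Set ℕ) : ℝ :=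
  limsup (fun x : ℕ ↦ (countIn S x : ℝ) / x) atTop

lemma HasDensity.upperDensity_eq {δ : ℝ} (h : HasDensity S δ) : upperDensity S = δ :=
  Tendsto.limsup_eq h

lemma isBoundedUnder_ge_countIn_div (S : Set ℕ) :
    IsBoundedUnder (· ≥ ·) atTop fun x : ℕ ↦ (countIn S x : ℝ) / x :=
  isBoundedUnder_of ⟨0, fun _ ↦ by positivity⟩

lemma isBoundedUnder_le_countIn_div (S : Set ℕ) :
    IsBoundedUnder (· ≤ ·) atTop fun x : ℕ ↦ (countIn S x : ℝ) / x :=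
  isBoundedUnder_of ⟨1, fun x ↦ div_le_one_of_le₀ (mod_cast countIn_le S x) x.cast_nonneg⟩

lemma upperDensity_le_of_countIn_le {c C : ℝ} (h : ∀ x : ℕ, (countIn S x : ℝ) ≤ c * x + C) :
    upperDensity S ≤ c := by
  have hlim : Tendsto (fun x : ℕ ↦ c + C / x) atTop (nhds c) := by
    simpa using (tendsto_const_div_atTop_nhds_zero_nat C).const_add c
  refine (limsup_le_limsup ?_ (isBoundedUnder_ge_countIn_div S).isCoboundedUnder_le
    hlim.isBoundedUnder_le).trans_eq hlim.limsup_eq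
  filter_upwards [eventually_gt_atTop 0] with x hx
  have hx' : (0 : ℝ) < x := mod_cast hx
  rw [div_le_iff₀ hx', add_mul, div_mul_cancel₀ _ hx'.ne']
  exact h x

lemma upperDensity_le_one (S : Set ℕ) : upperDensity S ≤ 1 :=
  upperDensity_le_of_countIn_le (C := 0) fun x ↦ by simpa using countIn_le S x

lemma upperDensity_union_le (S T : Set ℕ) :
    upperDensity (S ∪ T) ≤ upperDensity S + upperDensity T := by
  have hS := isBoundedUnder_le_countIn_div S
  have hT := isBoundedUnder_le_countIn_div T
  have hS' := isBoundedUnder_ge_countIn_div S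
  refine (limsup_le_limsup (.of_forall fun x ↦ ?_)
    (isBoundedUnder_ge_countIn_div _).isCoboundedUnder_le (isBoundedUnder_le_add hS hT)).trans
    (limsup_add_le hS' hS (isBoundedUnder_ge_countIn_div T).isCoboundedUnder_le hT)
  rw [Pi.add_apply, ← add_div]
  gcongr
  exact_mod_cast countIn_union_le S T x

end UpperDensity

section SetOfMultiples

lemma setOfMultiples_union (A B : Set ℕ) :
    setOfMultiples (A ∪ B) = setOfMultiples A ∪ setOfMultiples B := by
  ext n
  simp only [setOfMultiples, Set.mem_union, Set.mem_ofPred_eq, or_and_right, exists_or, and_or_left]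

lemma setOfMultiples_diff_singleton_zero (A : Set ℕ) :
    setOfMultiples (A \ {0}) = setOfMultiples A := by
  ext n
  refine and_congr_right fun hn ↦ exists_congr fun a ↦ ?_
  have : a ∣ n → a ≠ 0 := fun h ↦ (Nat.pos_of_dvd_of_pos h hn).ne'
  simp only [Set.mem_sdiff, Set.mem_singleton_iff]
  tauto

lemma add_mem_setOfMultiples_iff {B : Set ℕ} {L : ℕ} (hL : ∀ b ∈ B, b ∣ L) {n : ℕ} (hn : 0 < n) :
    L + n ∈ setOfMultiples B ↔ n ∈ setOfMultiples B := by
  refine and_congr (by omega) (exists_congr fun b ↦ and_congr_right fun hb ↦ ?_)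
  exact Nat.dvd_add_right (hL b hb)

lemma setOfMultiples_insert_subset (a : ℕ) (B : Set ℕ) :
    setOfMultiples (insert a B) ⊆ setOfMultiples B ∪ (a * ·) '' (setOfMultiples B)ᶜ := by
  rintro n ⟨hn, c, rfl | hc, hcn⟩
  · obtain ⟨m, rfl⟩ := hcn
    by_cases hm : m ∈ setOfMultiples B
    · obtain ⟨-, b, hb, hbm⟩ := hm
      exact .inl ⟨hn, b, hb, hbm.mul_left c⟩
    · exact .inr ⟨m, hm, rfl⟩
  · exact .inl ⟨hn, c, hc, hcn⟩

lemma countIn_setOfMultiples_insert_add_le {B : Set ℕ} {N : ℕ} (hN : ∀ b ∈ B, b ∣ N) (a : ℕ) :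
    countIn (setOfMultiples (insert a B)) (a * N) + countIn (setOfMultiples B) N ≤
      a * countIn (setOfMultiples B) N + N := by
  set M := setOfMultiples B
  have hperiod : countIn M (a * N) = a * countIn M N := by
    rw [mul_comm a N]
    exact countIn_mul_of_periodic (fun _ ↦ add_mem_setOfMultiples_iff hN) a
  calc countIn (setOfMultiples (insert a B)) (a * N) + countIn M N
      ≤ countIn M (a * N) + countIn ((a * ·) '' Mᶜ) (a * N) + countIn M N := by
        gcongr
        exact (countIn_mono_left (setOfMultiples_insert_subset a B) _).trans
          (countIn_union_le _ _ _)
    _ ≤ a * countIn M N + countIn Mᶜ N + countIn M N := by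
        gcongr
        · exact hperiod.le
        · exact countIn_image_mul_left_le _ _ _
    _ = a * countIn M N + N := by rw [add_assoc, add_comm (countIn Mᶜ N), countIn_add_countIn_compl]

variable {ι : Type*} (f : ι → ℕ)

lemma prod_one_sub_one_div_cast_le_one (s : Finset ι) : ∏ i ∈ s, (1 - 1 / (f i : ℝ)) ≤ 1 :=
  Finset.prod_le_one (fun i _ ↦ Nat.one_sub_one_div_cast_nonneg (f i))
    fun i _ ↦ Nat.one_sub_one_div_cast_le_one (f i)

lemma countIn_setOfMultiples_image_le_of_prod_dvd (s : Finset ι) {N : ℕ} (hN : ∏ i ∈ s, f i ∣ N) :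
    (countIn (setOfMultiples (f '' s)) N : ℝ) ≤ (1 - ∏ i ∈ s, (1 - 1 / (f i : ℝ))) * N := by
  classical
  induction s using Finset.induction_on generalizing N with
  | empty => simp [countIn, setOfMultiples]
  | insert j s hj ih =>
    rw [Finset.prod_insert hj] at hN
    obtain ⟨k, rfl⟩ := hN
    rw [Finset.prod_insert hj, Finset.coe_insert, Set.image_insert_eq, mul_assoc]
    set N := (∏ i ∈ s, f i) * k
    have hsN : ∀ b ∈ f '' s, b ∣ N := by
      rintro _ ⟨i, hi, rfl⟩
      exact (Finset.dvd_prod_of_mem f hi).mul_right k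
    obtain ha | ha := (f j).eq_zero_or_pos
    · simp [ha, countIn]
    have ha1 : (1 : ℝ) ≤ f j := mod_cast ha
    have hinsert : (countIn (setOfMultiples (insert (f j) (f '' s))) (f j * N) : ℝ)
        + countIn (setOfMultiples (f '' s)) N ≤ f j * countIn (setOfMultiples (f '' s)) N + N :=
      mod_cast countIn_setOfMultiples_insert_add_le hsN (f j)
    calc (countIn (setOfMultiples (insert (f j) (f '' s))) (f j * N) : ℝ)
        ≤ (f j - 1) * countIn (setOfMultiples (f '' s)) N + N := by linarith
      _ ≤ (f j - 1) * ((1 - ∏ i ∈ s, (1 - 1 / (f i : ℝ))) * N) + N := by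
          gcongr
          exact ih (Dvd.intro k rfl)
      _ = (1 - (1 - 1 / (f j : ℝ)) * ∏ i ∈ s, (1 - 1 / (f i : ℝ))) * (f j * N : ℕ) := by
          push_cast
          field_simp
          ring

lemma upperDensity_setOfMultiples_image_le_of_ne_zero (s : Finset ι) (hs : ∀ i ∈ s, f i ≠ 0) :
    upperDensity (setOfMultiples (f '' s)) ≤ 1 - ∏ i ∈ s, (1 - 1 / (f i : ℝ)) := by
  set L := ∏ i ∈ s, f i
  set P := ∏ i ∈ s, (1 - 1 / (f i : ℝ))
  have hL : 0 < L := Finset.prod_pos fun i hi ↦ Nat.pos_of_ne_zero (hs i hi)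
  refine upperDensity_le_of_countIn_le (C := (1 - P) * L) fun x ↦ ?_
  calc (countIn (setOfMultiples (f '' s)) x : ℝ)
      ≤ countIn (setOfMultiples (f '' s)) (L * (x / L + 1)) :=
        mod_cast countIn_mono_right _ (Nat.lt_mul_div_succ x hL).le
    _ ≤ (1 - P) * (L * (x / L + 1) : ℕ) :=
        countIn_setOfMultiples_image_le_of_prod_dvd f s (Dvd.intro _ rfl)
    _ ≤ (1 - P) * (x + L : ℕ) := by
        gcongr
        · exact sub_nonneg.2 (prod_one_sub_one_div_cast_le_one f s)
        · rw [mul_add_one]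
          gcongr
          exact Nat.mul_div_le x L
    _ = (1 - P) * x + (1 - P) * L := by push_cast; ring

lemma upperDensity_setOfMultiples_image_le (s : Finset ι) :
    upperDensity (setOfMultiples (f '' s)) ≤ 1 - ∏ i ∈ s, (1 - 1 / (f i : ℝ)) := by
  classical
  have himage : f '' (s.filter (f · ≠ 0) : Finset ι) = f '' s \ {0} := by
    ext n
    simp only [Finset.coe_filter, Set.mem_image, Set.mem_ofPred_eq, Set.mem_sdiff, Finset.mem_coe,
      Set.mem_singleton_iff]
    grind
  have hprod : ∏ i ∈ s with f i ≠ 0, (1 - 1 / (f i : ℝ)) = ∏ i ∈ s, (1 - 1 / (f i : ℝ)) :=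
    Finset.prod_filter_of_ne fun i _ hi h0 ↦ hi (by simp [h0])
  rw [← setOfMultiples_diff_singleton_zero, ← himage, ← hprod]
  exact upperDensity_setOfMultiples_image_le_of_ne_zero f _ fun i hi ↦ (Finset.mem_filter.1 hi).2

variable {f}

lemma countIn_setOfMultiples_range_le (hf : Summable fun i ↦ 1 / (f i : ℝ)) (x : ℕ) :
    (countIn (setOfMultiples (Set.range f)) x : ℝ) ≤ (∑' i, 1 / (f i : ℝ)) * x := by
  classical
  set D := (Finset.Icc 1 x).filter (· ∈ setOfMultiples (Set.range f))
  have hdvd : ∀ n : D, ∃ i, f i ∣ n := fun n ↦ by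
    obtain ⟨-, -, _, ⟨i, rfl⟩, hi⟩ := Finset.mem_filter.1 n.2
    exact ⟨i, hi⟩
  choose g hg using hdvd
  set I := Finset.univ.image g
  have hcover : D ⊆ I.biUnion fun i ↦ (Finset.Ioc 0 x).filter (f i ∣ ·) := fun n hn ↦
    Finset.mem_biUnion.2 ⟨g ⟨n, hn⟩, Finset.mem_image_of_mem g (Finset.mem_univ _),
      Finset.mem_filter.2 ⟨(Finset.mem_filter.1 hn).1, hg ⟨n, hn⟩⟩⟩
  have hcard : D.card ≤ ∑ i ∈ I, x / f i := by
    simpa only [Nat.Ioc_filter_dvd_card_eq_div] using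
      (Finset.card_le_card hcover).trans Finset.card_biUnion_le
  calc (countIn (setOfMultiples (Set.range f)) x : ℝ)
      ≤ ∑ i ∈ I, ((x / f i : ℕ) : ℝ) := mod_cast hcard
    _ ≤ ∑ i ∈ I, 1 / (f i : ℝ) * x := by
        gcongr with i
        rw [one_div_mul_eq_div]
        exact Nat.cast_div_le
    _ ≤ (∑' i, 1 / (f i : ℝ)) * x := by
        rw [← Finset.sum_mul]
        gcongr
        exact hf.sum_le_tsum I fun i _ ↦ by positivity

lemma upperDensity_setOfMultiples_range_le_tsum (hf : Summable fun i ↦ 1 / (f i : ℝ)) :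
    upperDensity (setOfMultiples (Set.range f)) ≤ ∑' i, 1 / (f i : ℝ) :=
  upperDensity_le_of_countIn_le (C := 0) fun x ↦ by
    simpa only [add_zero] using countIn_setOfMultiples_range_le hf x

lemma upperDensity_setOfMultiples_range_le_add_tsum (hf : Summable fun i ↦ 1 / (f i : ℝ))
    (s : Finset ι) :
    upperDensity (setOfMultiples (Set.range f)) ≤
      1 - ∏ i ∈ s, (1 - 1 / (f i : ℝ)) + ∑' i : {i // i ∉ s}, 1 / (f i : ℝ) := by
  have hsplit : Set.range f = f '' s ∪ Set.range fun i : {i // i ∉ s} ↦ f i := by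
    ext n
    simp only [Set.mem_range, Set.mem_union, Set.mem_image, Finset.mem_coe, Subtype.exists]
    grind
  rw [hsplit, setOfMultiples_union]
  exact (upperDensity_union_le _ _).trans <| add_le_add (upperDensity_setOfMultiples_image_le f s)
    (upperDensity_setOfMultiples_range_le_tsum (hf.comp_injective Subtype.val_injective))

end SetOfMultiples

lemma hasProd_one_sub_zero_of_not_summable {ι : Type*} {u : ι → ℝ} (hu0 : ∀ i, 0 ≤ u i)
    (hu1 : ∀ i, u i ≤ 1) (hu : ¬ Summable u) : HasProd (fun i ↦ 1 - u i) 0 := by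
  have hsum : Tendsto (fun s : Finset ι ↦ ∑ i ∈ s, u i) atTop atTop := by
    refine tendsto_atTop_atTop_of_monotone' (Finset.sum_mono_set_of_nonneg hu0) ?_
    rintro ⟨c, hc⟩
    exact hu (summable_of_sum_le hu0 fun s ↦ hc (Set.mem_range_self s))
  have hle (s : Finset ι) : ∏ i ∈ s, (1 - u i) ≤ Real.exp (-∑ i ∈ s, u i) := by
    rw [← Finset.sum_neg_distrib, Real.exp_sum]
    exact Finset.prod_le_prod (fun i _ ↦ sub_nonneg.2 (hu1 i))
      fun i _ ↦ Real.one_sub_le_exp_neg (u i)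
  exact squeeze_zero (fun s ↦ Finset.prod_nonneg fun i _ ↦ sub_nonneg.2 (hu1 i)) hle
    (Real.tendsto_exp_neg_atTop_nhds_zero.comp hsum)

theorem density_setOfMultiples_le_general {ι : Type*} (f : ι → ℕ) :
    upperDensity (setOfMultiples (Set.range f)) ≤ 1 - ∏' i, (1 - 1 / (f i : ℝ)) := by
  by_cases hf : Summable fun i ↦ 1 / (f i : ℝ)
  · have hmul : Multipliable fun i ↦ 1 - 1 / (f i : ℝ) := by
      simpa only [sub_eq_add_neg] using Real.multipliable_one_add_of_summable hf.neg
    have hprod : Tendsto (fun s ↦ ∏ i ∈ s, (1 - 1 / (f i : ℝ))) atTop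
        (nhds (∏' i, (1 - 1 / (f i : ℝ)))) := hmul.hasProd
    have htail := tendsto_tsum_compl_atTop_zero fun i ↦ 1 / (f i : ℝ)
    have hlim := (hprod.const_sub 1).add htail
    rw [add_zero] at hlim
    exact ge_of_tendsto' hlim (upperDensity_setOfMultiples_range_le_add_tsum hf)
  · have hzero : HasProd (fun i ↦ 1 - 1 / (f i : ℝ)) 0 :=
      hasProd_one_sub_zero_of_not_summable (fun i ↦ by positivity)
        (fun i ↦ sub_nonneg.1 (Nat.one_sub_one_div_cast_nonneg (f i))) hf
    rw [hzero.tprod_eq, sub_zero]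
    exact upperDensity_le_one _

/-- (Heilbronn–Rohrbach) Whenever the set of multiples of `A` has an asymptotic
density `δ`, one has `δ ≤ 1 - ∏_{a ∈ A} (1 - 1/a)`. -/
theorem density_setOfMultiples_le (A : Set ℕ) (δ : ℝ)
    (h : HasDensity (setOfMultiples A) δ) :
    δ ≤ 1 - ∏' a : A, (1 - 1 / (a : ℝ)) := by
  simpa only [h.upperDensity_eq, Subtype.range_coe] using
    density_setOfMultiples_le_general ((↑) : A → ℕ)
end
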